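/- Let α and α' be irrational numbers whose continued fraction convergents have denominators q_n and q'_n respectively, such that for every γ > 1 the inequalities q'_n ≥ q_n^γ and q_{n+1} ≥ (q'_n)^γ hold for all sufficiently large n. Let T be the translation of the two-torus T² by the vector (α, α'). Then for every point x₀ ∈ T², for Lebesgue-almost every x ∈ T², the lower hitting time indicator R̲(x,x₀) = liminf_{r→0} log τ_r(x,x₀)/(−log r) is infinite. -/

import Mathlib

/-!
Write `q n`, `q' n` for the denominators of the convergents of `α` and `α'`.  Up to time
`q (n+1) / (2 q n)` the rotation by `α` stays within `1 / (2 (q n)²)` of the periodic rotation by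
`p n / q n`.  The points within `1 / (q n)²` of a given orbit of the latter have measure
at most `2 / q n`, which is summable because `q (n+1) ≥ (q n)²` eventually.  By Borel–Cantelli, for
almost every starting point and all large `n`, the rotation by `α` therefore stays at distance at
least `1 / (2 (q n)²)` from the target up to time `q (n+1) / (2 q n)`
(`rotation_eventually_far`); the same holds for `α'`.

Now fix `K` and let `s = 1 / r` be large, with `2 (q n)² ≤ s < 2 (q (n+1))²`.  If `s < 2 (q' n)²`,
the first coordinate forbids a visit to the ball up to time `q (n+1) / (2 q n)`, which exceeds `s ^ K`
since `q (n+1)` is larger than any given power of `q' n`.  If `s ≥ 2 (q' n)²`, the second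
coordinate forbids it up to time `q' (n+1) / (2 q' n)`, which exceeds `s ^ K` since `q' (n+1)` is
larger than any given power of `q (n+1)`.  So `τ_r ≥ r ^ (-K)` for all small `r`, for every `K`.
-/

open Filter MeasureTheory Metric Topology ENNReal

/-- Hitting time of the orbit of `x` into the ball `B(x₀,r)` (as extended natural, `⊤` if never). -/
noncomputable def hitTime {X : Type*} [PseudoMetricSpace X] (T : X → X) (x x₀ : X) (r : ℝ) : ℕ∞ :=
  sInf {N : ℕ∞ | ∃ n : ℕ, N = n ∧ 1 ≤ n ∧ T^[n] x ∈ Metric.ball x₀ r}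

/-- The ratio `log τ_r(x,x₀) / (- log r)`, with values in the extended reals. -/
noncomputable def hitRatio {X : Type*} [PseudoMetricSpace X] (T : X → X) (x x₀ : X) (r : ℝ) :
    EReal :=
  ENNReal.log ((hitTime T x x₀ r : ℕ∞) : ℝ≥0∞) / ((-Real.log r : ℝ) : EReal)

/-- Upper hitting time indicator `R̄(x,x₀)`. -/
noncomputable def Rupper {X : Type*} [PseudoMetricSpace X] (T : X → X) (x x₀ : X) : EReal :=
  limsup (hitRatio T x x₀) (𝓝[>] (0:ℝ))

/-- Lower hitting time indicator `R̲(x,x₀)`. -/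
noncomputable def Rlower {X : Type*} [PseudoMetricSpace X] (T : X → X) (x x₀ : X) : EReal :=
  liminf (hitRatio T x x₀) (𝓝[>] (0:ℝ))

/-- The ratio `log μ(B(x₀,r)) / log r`, with values in the extended reals. -/
noncomputable def dimRatio {X : Type*} [PseudoMetricSpace X] [MeasurableSpace X]
    (μ : Measure X) (x₀ : X) (r : ℝ) : EReal :=
  ENNReal.log (μ (Metric.ball x₀ r)) / ((Real.log r : ℝ) : EReal)

/-- Upper local dimension of `μ` at `x₀`. -/
noncomputable def dimUpper {X : Type*} [PseudoMetricSpace X] [MeasurableSpace X]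
    (μ : Measure X) (x₀ : X) : EReal :=
  limsup (dimRatio μ x₀) (𝓝[>] (0:ℝ))

/-- Lower local dimension of `μ` at `x₀`. -/
noncomputable def dimLower {X : Type*} [PseudoMetricSpace X] [MeasurableSpace X]
    (μ : Measure X) (x₀ : X) : EReal :=
  liminf (dimRatio μ x₀) (𝓝[>] (0:ℝ))

/-- Correlation-decay inequality for all (bounded) Lipschitz observables, where the Lipschitz
norm of an observable is (a bound on) its sup norm plus (a bound on) its Lipschitz constant. -/
def CorrDecayWith {X : Type*} [PseudoMetricSpace X] [MeasurableSpace X]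
    (T : X → X) (μ : Measure X) (Φ : ℕ → ℝ) : Prop :=
  ∀ (φ ψ : X → ℝ) (Kφ Kψ : NNReal) (Bφ Bψ : ℝ),
    LipschitzWith Kφ φ → LipschitzWith Kψ ψ →
    (∀ x, |φ x| ≤ Bφ) → (∀ x, |ψ x| ≤ Bψ) →
    ∀ n : ℕ,
      |(∫ x, φ (T^[n] x) * ψ x ∂μ) - (∫ x, φ x ∂μ) * ∫ x, ψ x ∂μ| ≤
        (Bφ + Kφ) * (Bψ + Kψ) * Φ n

/-- Decay of correlations with power law speed of exponent `p`. -/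
def PowerLawDecay {X : Type*} [PseudoMetricSpace X] [MeasurableSpace X]
    (T : X → X) (μ : Measure X) (p : ℝ) : Prop :=
  ∃ Φ : ℕ → ℝ, (∀ n, 0 ≤ Φ n) ∧
    Tendsto (fun n : ℕ => -Real.log (Φ n) / Real.log n) atTop (𝓝 p) ∧
    CorrDecayWith T μ Φ

/-- Denominators of the convergents of the continued fraction expansion of `α`. -/
noncomputable def cfDen (α : ℝ) (n : ℕ) : ℝ := (GenContFract.of α).dens n

/-- Distance of a real number to the nearest integer. -/
noncomputable def intDist (x : ℝ) : ℝ := |x - round x|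

/-! ### Convergents of an irrational number -/

/-- The continuants of the continued fraction of a real number are integers. -/
lemma exists_int_contsAux (v : ℝ) (n : ℕ) :
    (∃ a b : ℤ, (GenContFract.of v).contsAux n = ⟨(a : ℝ), (b : ℝ)⟩) ∧
      ∃ a b : ℤ, (GenContFract.of v).contsAux (n + 1) = ⟨(a : ℝ), (b : ℝ)⟩ := by
  induction n with
  | zero =>
    refine ⟨⟨1, 0, ?_⟩, ⟨⌊v⌋, 1, ?_⟩⟩
    · simp [GenContFract.contsAux]
    · simp [GenContFract.contsAux, GenContFract.of_h_eq_floor]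
  | succ n ih =>
    refine ⟨ih.2, ?_⟩
    obtain ⟨⟨a, b, h0⟩, c, d, h1⟩ := ih
    rcases hs : (GenContFract.of v).s.get? n with _ | gp
    · refine ⟨c, d, ?_⟩
      rw [← h1]
      exact GenContFract.contsAux_stable_step_of_terminated hs
    · obtain ⟨ha, z, hz⟩ := GenContFract.of_partNum_eq_one_and_exists_int_partDen_eq hs
      refine ⟨z * c + a, z * d + b, ?_⟩
      rw [GenContFract.contsAux_recurrence hs h0 h1, ha, hz]
      push_cast
      simp

/-- The convergents `P n / Q n` of an irrational number: positive integral denominators tending to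
infinity, and the classical approximation bound. -/
lemma exists_convergents (α : ℝ) (hα : Irrational α) :
    ∃ (P : ℕ → ℤ) (Q : ℕ → ℕ), (∀ n, cfDen α n = Q n) ∧ (∀ n, 0 < Q n) ∧
      Tendsto (fun n => (Q n : ℝ)) atTop atTop ∧
      ∀ n, |α - P n / Q n| ≤ 1 / (Q n * Q (n + 1)) := by
  have hterm : ∀ n, ¬ (GenContFract.of α).TerminatedAt n := by
    intro n hn
    obtain ⟨q, hq⟩ := (GenContFract.terminates_iff_rat α).1 ⟨n, hn⟩
    exact hα ⟨q, hq.symm⟩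
  have hfib : ∀ n, (Nat.fib (n + 1) : ℝ) ≤ (GenContFract.of α).dens n := fun n =>
    GenContFract.succ_nth_fib_le_of_nth_den (Or.inr (hterm _))
  have hint : ∀ n, ∃ (p : ℤ) (q : ℕ),
      (GenContFract.of α).nums n = p ∧ (GenContFract.of α).dens n = q := by
    intro n
    obtain ⟨a, b, h⟩ := (exists_int_contsAux α n).2
    have hb : (GenContFract.of α).dens n = b := by
      rw [GenContFract.den_eq_conts_b, GenContFract.nth_cont_eq_succ_nth_contAux, h]
    have ha : (GenContFract.of α).nums n = a := by
      rw [GenContFract.num_eq_conts_a, GenContFract.nth_cont_eq_succ_nth_contAux, h]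
    have hb0 : 0 ≤ b := by
      have := GenContFract.zero_le_of_den (v := α) (n := n)
      rw [hb] at this
      exact_mod_cast this
    lift b to ℕ using hb0
    exact ⟨a, b, ha, by simpa using hb⟩
  choose P Q hP hQ using hint
  refine ⟨P, Q, hQ, ?_, ?_, ?_⟩
  · intro n
    have h1 := hfib n
    rw [hQ] at h1
    have h2 : 0 < Nat.fib (n + 1) := Nat.fib_pos.2 n.succ_pos
    have h3 : Nat.fib (n + 1) ≤ Q n := by exact_mod_cast h1
    omega
  · refine tendsto_atTop_mono (f := fun n : ℕ => (n : ℝ)) ?_ tendsto_natCast_atTop_atTop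
    intro n
    have h1 := hfib n
    rw [hQ] at h1
    have h2 := Nat.le_fib_add_one (n + 1)
    have h3 : n ≤ Nat.fib (n + 1) := by omega
    exact le_trans (by exact_mod_cast h3) h1
  · intro n
    have := GenContFract.abs_sub_convs_le (hterm n)
    rwa [GenContFract.conv_eq_num_div_den, hP, hQ, hQ] at this

/-! ### Orbits of a circle rotation and Borel–Cantelli -/

/-- Almost every rotation orbit stays at distance at least `1 / (2 (Q n)²)` from a given point up to
time `Q (n+1) / (2 Q n)`, for all large `n`. -/
lemma rotation_eventually_far (α : ℝ) (P : ℕ → ℤ) (Q : ℕ → ℕ) (hpos : ∀ n, 0 < Q n)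
    (happ : ∀ n, |α - P n / Q n| ≤ 1 / (Q n * Q (n + 1)))
    (hsum : Summable (fun n => 1 / (Q n : ℝ))) (y₀ : AddCircle (1 : ℝ)) :
    ∀ᵐ y ∂(volume : Measure (AddCircle (1 : ℝ))), ∀ᶠ n in atTop, ∀ m : ℕ,
      (m : ℝ) * (2 * Q n) ≤ Q (n + 1) →
        1 / (2 * (Q n : ℝ) ^ 2) ≤ dist (y + m • (α : AddCircle (1 : ℝ))) y₀ := by
  -- `E n` consists of the points within `1 / (Q n)²` of an orbit of the rotation by `1 / Q n`.
  set E : ℕ → Set (AddCircle (1 : ℝ)) := fun n =>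
    ⋃ k ∈ Finset.range (Q n),
      closedBall (y₀ - ((k / Q n : ℝ) : AddCircle (1 : ℝ))) (1 / (Q n : ℝ) ^ 2) with hE
  have hmeas : ∀ n, volume (E n) ≤ ENNReal.ofReal (2 * (1 / Q n)) := by
    intro n
    have hq : (0 : ℝ) < Q n := by exact_mod_cast hpos n
    calc volume (E n) ≤ ∑ k ∈ Finset.range (Q n), volume
          (closedBall (y₀ - ((k / Q n : ℝ) : AddCircle (1 : ℝ))) (1 / (Q n : ℝ) ^ 2)) :=
          measure_biUnion_finset_le _ _
      _ ≤ ∑ k ∈ Finset.range (Q n), ENNReal.ofReal (2 * (1 / (Q n : ℝ) ^ 2)) := by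
          refine Finset.sum_le_sum fun k _ => ?_
          rw [AddCircle.volume_closedBall]
          exact ENNReal.ofReal_le_ofReal (min_le_right _ _)
      _ = ENNReal.ofReal (2 * (1 / Q n)) := by
          rw [Finset.sum_const, Finset.card_range, ← ENNReal.ofReal_nsmul, nsmul_eq_mul]
          congr 1
          field_simp
  have hfin : ∑' n, volume (E n) ≠ ∞ := by
    refine ne_top_of_le_ne_top ?_ (ENNReal.tsum_le_tsum hmeas)
    exact (hsum.mul_left 2).tsum_ofReal_ne_top
  filter_upwards [ae_eventually_notMem hfin] with y hy
  filter_upwards [hy] with n hn m hm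
  by_contra! hlt
  apply hn
  have hq : (0 : ℝ) < Q n := by exact_mod_cast hpos n
  have hq1 : (0 : ℝ) < Q (n + 1) := by exact_mod_cast hpos (n + 1)
  have hz : (0 : ℤ) < Q n := by exact_mod_cast hpos n
  -- `m P / Q` is congruent to `k / Q` modulo the integer `c`.
  set k : ℕ := ((m * P n) % (Q n : ℤ)).toNat with hk
  set c : ℤ := (m * P n) / (Q n : ℤ) with hc
  have hk0 : 0 ≤ (m * P n) % (Q n : ℤ) := Int.emod_nonneg _ hz.ne'
  have hklt : k < Q n := by
    have := Int.emod_lt_of_pos (m * P n) hz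
    omega
  have hkz : (m * P n : ℤ) = k + Q n * c := by
    have h1 := Int.emod_add_mul_ediv (m * P n) (Q n)
    have h2 : (k : ℤ) = (m * P n) % (Q n : ℤ) := Int.toNat_of_nonneg hk0
    rw [h2, hc, h1]
  have hkr : (m * P n : ℝ) = k + Q n * c := by exact_mod_cast hkz
  have hdec : (m : ℝ) * α = k / Q n + c + m * (α - P n / Q n) := by
    field_simp
    linear_combination hkr
  have hcirc : m • (α : AddCircle (1 : ℝ)) =
      ((k / Q n : ℝ) : AddCircle (1 : ℝ)) + ((m * (α - P n / Q n) : ℝ) : AddCircle (1 : ℝ)) := by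
    have h1 : m • (α : AddCircle (1 : ℝ)) = (((m : ℝ) * α : ℝ) : AddCircle (1 : ℝ)) := by
      rw [← nsmul_eq_mul, AddCircle.coe_nsmul]
    have h2 : ((c : ℝ) : AddCircle (1 : ℝ)) = 0 := by
      rw [AddCircle.coe_eq_zero_iff]
      exact ⟨c, by simp⟩
    rw [h1, hdec, AddCircle.coe_add, AddCircle.coe_add, h2, add_zero]
  have herr : ‖((m * (α - P n / Q n) : ℝ) : AddCircle (1 : ℝ))‖ ≤ 1 / (2 * (Q n : ℝ) ^ 2) := by
    have h0 : ‖((m * (α - P n / Q n) : ℝ) : AddCircle (1 : ℝ))‖ ≤ |m * (α - P n / Q n)| := by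
      exact QuotientAddGroup.norm_mk_le_norm
    refine h0.trans ?_
    rw [abs_mul, Nat.abs_cast]
    calc (m : ℝ) * |α - P n / Q n| ≤ m * (1 / (Q n * Q (n + 1))) := by
          gcongr
          exact happ n
      _ ≤ 1 / (2 * (Q n : ℝ) ^ 2) := by
          rw [mul_one_div, div_le_div_iff₀ (by positivity) (by positivity)]
          nlinarith
  simp only [hE, Set.mem_iUnion, Finset.mem_range]
  refine ⟨k, hklt, ?_⟩
  rw [mem_closedBall, dist_eq_norm]
  rw [dist_eq_norm, hcirc] at hlt
  set u := ((m * (α - P n / Q n) : ℝ) : AddCircle (1 : ℝ))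
  set w := ((k / Q n : ℝ) : AddCircle (1 : ℝ))
  have hsplit : y - (y₀ - w) = (y + (w + u) - y₀) - u := by abel
  rw [hsplit]
  refine (norm_sub_le _ _).trans ((add_le_add hlt.le herr).trans (le_of_eq ?_))
  field_simp
  norm_num

/-- Reciprocals of a positive sequence growing at least quadratically are summable. -/
lemma summable_one_div_of_sq_le (Q : ℕ → ℕ) (hpos : ∀ n, 0 < Q n)
    (hlim : Tendsto (fun n => (Q n : ℝ)) atTop atTop)
    (hsq : ∀ᶠ n in atTop, (Q n : ℝ) ^ 2 ≤ Q (n + 1)) :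
    Summable (fun n => 1 / (Q n : ℝ)) := by
  refine summable_of_ratio_norm_eventually_le (r := 1 / 2) (by norm_num) ?_
  filter_upwards [hsq, hlim.eventually_ge_atTop 2] with n h1 h2
  have hq : (0 : ℝ) < Q n := by exact_mod_cast hpos n
  have hq1 : (0 : ℝ) < Q (n + 1) := by exact_mod_cast hpos (n + 1)
  rw [Real.norm_of_nonneg (by positivity), Real.norm_of_nonneg (by positivity),
    div_mul_div_comm, div_le_div_iff₀ (by positivity) (by positivity)]
  nlinarith

/-! ### Scales and hitting times -/

/-- If `c` is at least a suitable power of `b`, then at scales `s < 2 b²` the time `s ^ K` does not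
exceed `c / (2 a)` for `a ≤ b`. -/
lemma pow_mul_le_of_lt {s a b c : ℝ} (K : ℕ) (hs0 : 0 ≤ s) (hs : s < 2 * b ^ 2) (hb : 2 ≤ b)
    (hab : a ≤ b) (hbc : b ^ (3 * K + 2) ≤ c) : s ^ K * (2 * a) ≤ c := by
  calc s ^ K * (2 * a) ≤ (b ^ 3) ^ K * (b * b) := by
        have h1 : s ≤ b ^ 3 := by nlinarith [sq_nonneg b]
        have h2 : 2 * a ≤ b * b := by nlinarith
        have h3 : 0 ≤ b := by linarith
        exact (mul_le_mul_of_nonneg_left h2 (by positivity)).trans (by gcongr)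
    _ = b ^ (3 * K + 2) := by rw [← pow_mul]; ring
    _ ≤ c := hbc

lemma exists_index_of_tendsto (f : ℕ → ℝ) (hf : Tendsto f atTop atTop) (N : ℕ) (s : ℝ)
    (hs : f N ≤ s) : ∃ n, N ≤ n ∧ f n ≤ s ∧ s < f (n + 1) := by
  by_contra! h
  have hall : ∀ n, N ≤ n → f n ≤ s := by
    intro n hn
    induction n, hn using Nat.le_induction with
    | base => exact hs
    | succ n hn ih => exact h n hn ih
  obtain ⟨M, hM⟩ := ((hf.eventually_gt_atTop s).and (eventually_ge_atTop N)).exists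
  exact absurd (hall M hM.2) (not_le.2 hM.1)

/-- A lower bound `r ^ (-K)` on all visit times bounds the hitting ratio below by `K`. -/
lemma le_hitRatio {X : Type*} [PseudoMetricSpace X] (T : X → X) (x x₀ : X) (r : ℝ) (K : ℕ)
    (hr0 : 0 < r) (hr1 : r < 1)
    (h : ∀ m : ℕ, T^[m] x ∈ ball x₀ r → (1 / r) ^ K ≤ (m : ℝ)) :
    ((K : ℝ) : EReal) ≤ hitRatio T x x₀ r := by
  have hlog : 0 < -Real.log r := neg_pos.2 (Real.log_neg hr0 hr1)
  have hspos : (0 : ℝ) < (1 / r) ^ K := by positivity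
  have hhit : ENNReal.ofReal ((1 / r) ^ K) ≤ ((hitTime T x x₀ r : ℕ∞) : ℝ≥0∞) := by
    -- The infimum is either `⊤` or attained.
    rcases Set.eq_empty_or_nonempty
      {N : ℕ∞ | ∃ n : ℕ, N = n ∧ 1 ≤ n ∧ T^[n] x ∈ Metric.ball x₀ r} with he | hne
    · rw [hitTime, he]
      simp
    · obtain ⟨n, hn, -, hmem⟩ := csInf_mem hne
      rw [hitTime, hn]
      simpa using ENNReal.ofReal_le_ofReal (h n hmem)
  unfold hitRatio
  rw [EReal.le_div_iff_mul_le (by exact_mod_cast hlog) (EReal.coe_ne_top _)]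
  refine le_trans (le_of_eq ?_) (ENNReal.log_le_log hhit)
  rw [ENNReal.log_ofReal_of_pos hspos, ← EReal.coe_mul, Real.log_pow, one_div, Real.log_inv]

/-- For a translation of the two-torus by `(α, α')` whose continued fraction denominators are
`γ`-intertwined for every `γ > 1`, the lower hitting time indicator is infinite at every target
point `x₀`, for Lebesgue-almost every `x`. -/
theorem stmt_1 (α α' : ℝ) (hα : Irrational α) (hα' : Irrational α')
    (hq : ∀ γ : ℝ, 1 < γ → ∀ᶠ n : ℕ in atTop,
      (cfDen α n) ^ γ ≤ cfDen α' n ∧ (cfDen α' n) ^ γ ≤ cfDen α (n + 1))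
    (x₀ : AddCircle (1:ℝ) × AddCircle (1:ℝ)) :
    ∀ᵐ x ∂(volume : Measure (AddCircle (1:ℝ) × AddCircle (1:ℝ))),
      Rlower (fun p => (p.1 + (α : AddCircle (1:ℝ)), p.2 + (α' : AddCircle (1:ℝ)))) x x₀ = ⊤ := by
  obtain ⟨P, Q, hQ, hpos, hlim, happ⟩ := exists_convergents α hα
  obtain ⟨P', Q', hQ', hpos', hlim', happ'⟩ := exists_convergents α' hα'
  have hpow : ∀ k : ℕ, 2 ≤ k → ∀ᶠ n : ℕ in atTop,
      (Q n : ℝ) ^ k ≤ Q' n ∧ (Q' n : ℝ) ^ k ≤ Q (n + 1) := by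
    intro k hk
    have := hq k (by exact_mod_cast hk)
    simpa only [hQ, hQ', Real.rpow_natCast] using this
  have hone : ∀ n, (1 : ℝ) ≤ Q n := fun n => by exact_mod_cast hpos n
  have hone' : ∀ n, (1 : ℝ) ≤ Q' n := fun n => by exact_mod_cast hpos' n
  have hle : ∀ᶠ n : ℕ in atTop, (Q n : ℝ) ≤ Q' n ∧ (Q' n : ℝ) ≤ Q (n + 1) := by
    filter_upwards [hpow 2 le_rfl] with n hn
    exact ⟨(le_self_pow₀ (hone n) two_ne_zero).trans hn.1,
      (le_self_pow₀ (hone' n) two_ne_zero).trans hn.2⟩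
  have hsum : Summable (fun n => 1 / (Q n : ℝ)) := by
    refine summable_one_div_of_sq_le Q hpos hlim ?_
    filter_upwards [hpow 2 le_rfl, hle] with n h1 h2
    exact h1.1.trans h2.2
  have hsum' : Summable (fun n => 1 / (Q' n : ℝ)) := by
    refine summable_one_div_of_sq_le Q' hpos' hlim' ?_
    filter_upwards [hpow 2 le_rfl, (tendsto_add_atTop_nat 1).eventually hle] with n h1 h2
    exact h1.2.trans h2.1
  have h1 := rotation_eventually_far α P Q hpos happ hsum x₀.1
  have h2 := rotation_eventually_far α' P' Q' hpos' happ' hsum' x₀.2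
  rw [Measure.volume_eq_prod]
  filter_upwards [Measure.quasiMeasurePreserving_fst.ae h1,
    Measure.quasiMeasurePreserving_snd.ae h2] with x hx hx'
  set T : AddCircle (1:ℝ) × AddCircle (1:ℝ) → AddCircle (1:ℝ) × AddCircle (1:ℝ) :=
    fun p => (p.1 + (α : AddCircle (1:ℝ)), p.2 + (α' : AddCircle (1:ℝ))) with hT
  have hiter : ∀ m : ℕ, T^[m] x =
      (x.1 + m • (α : AddCircle (1:ℝ)), x.2 + m • (α' : AddCircle (1:ℝ))) := by
    intro m
    induction m with
    | zero => simp
    | succ m ih =>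
      rw [Function.iterate_succ_apply', ih]
      simp only [hT, succ_nsmul, add_assoc]
  -- It suffices to bound the liminf below by every natural number.
  suffices hK : ∀ K : ℕ, ∀ᶠ r in 𝓝[>] (0 : ℝ), ((K : ℝ) : EReal) ≤ hitRatio T x x₀ r by
    rw [EReal.eq_top_iff_forall_lt]
    intro y
    obtain ⟨K, hKy⟩ := exists_nat_gt y
    exact (EReal.coe_lt_coe_iff.2 hKy).trans_le (le_liminf_of_le (by isBoundedDefault) (hK K))
  intro K
  obtain ⟨N, hN⟩ := eventually_atTop.1 (((hpow (3 * K + 2) (by omega)).and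
    ((tendsto_add_atTop_nat 1).eventually (hpow (3 * K + 2) (by omega)))).and
    (hle.and ((hlim.eventually_ge_atTop 2).and (hx.and hx'))))
  have hscale : Tendsto (fun n => 2 * (Q n : ℝ) ^ 2) atTop atTop :=
    ((tendsto_pow_atTop two_ne_zero).comp hlim).const_mul_atTop two_pos
  have hinv : ∀ᶠ r in 𝓝[>] (0 : ℝ), 2 * (Q N : ℝ) ^ 2 ≤ r⁻¹ :=
    tendsto_inv_nhdsGT_zero.eventually_ge_atTop _
  filter_upwards [hinv, Ioo_mem_nhdsGT (one_pos : (0 : ℝ) < 1)] with r hrN hr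
  obtain ⟨hr0, hr1⟩ := hr
  refine le_hitRatio T x x₀ r K hr0 hr1 fun m hm => ?_
  obtain ⟨n, hn, hs1, hs2⟩ := exists_index_of_tendsto _ hscale N _ hrN
  obtain ⟨⟨⟨-, hp⟩, hp', -⟩, ⟨hab, hbc⟩, hQ2, hfar, hfar'⟩ := hN n hn
  rw [hiter, mem_ball, Prod.dist_eq, max_lt_iff] at hm
  obtain ⟨hm1, hm2⟩ := hm
  have hs0 : (0 : ℝ) < r⁻¹ := inv_pos.2 hr0
  by_contra! hlt
  rw [one_div] at hlt
  have hrle : ∀ q : ℝ, 0 < q → 2 * q ^ 2 ≤ r⁻¹ → r ≤ 1 / (2 * q ^ 2) := by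
    intro q hq0 h
    rw [le_div_iff₀ (by positivity)]
    calc r * (2 * q ^ 2) ≤ r * r⁻¹ := by gcongr
      _ = 1 := mul_inv_cancel₀ hr0.ne'
  rcases lt_or_ge r⁻¹ (2 * (Q' n : ℝ) ^ 2) with hc | hc
  · have hb : r⁻¹ ^ K * (2 * (Q n : ℝ)) ≤ Q (n + 1) :=
      pow_mul_le_of_lt K hs0.le hc (hQ2.trans hab) hab hp
    have hfm := hfar m (le_trans (by gcongr) hb)
    linarith [hrle (Q n) (by linarith) hs1]
  · have hb : r⁻¹ ^ K * (2 * (Q' n : ℝ)) ≤ Q' (n + 1) :=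
      pow_mul_le_of_lt K hs0.le hs2 (by linarith) hbc hp'
    have hfm := hfar' m (le_trans (by gcongr) hb)
    linarith [hrle (Q' n) (by linarith) hc]
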